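/- For q = 2^s with s ≥ 2 and all β, γ ∈ F_q, the matrix identity U_β^{(5)} · X^γ · U_β^{(5)} = ε(tr(βγ^5)) · X^γ · Z^{(βγ)^{2^{s−2}} + βγ^4} holds in the q×q complex matrices (note that x ↦ x^{2^{s−2}} is the unique fourth-root map in F_q). -/

import Mathlib

noncomputable section

/-- The trace map `tr : F_{2^s} → F_2 ⊆ F_{2^s}`, `tr γ = Σ_{i=0}^{s-1} γ^{2^i}`
(its values lie in the prime field `{0, 1}`). -/
def trF {F : Type} [Field F] (s : ℕ) (x : F) : F := ∑ i ∈ Finset.range s, x ^ 2 ^ i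

/-- `ε ∘ tr : F_{2^s} → ℂ`, where `ε 0 = 1` and `ε 1 = -1` on the prime field `F_2`. -/
def epsTr {F : Type} [Field F] [DecidableEq F] (s : ℕ) (x : F) : ℂ := if trF s x = 0 then 1 else -1

/-- The Pauli `X^β`: `(X^β)_{η,η'} = 1` if `η = η' + β`, else `0`. -/
def Xm {F : Type} [Field F] [Fintype F] [DecidableEq F] (β : F) : Matrix F F ℂ :=
  Matrix.of fun η η' => if η = η' + β then 1 else 0

/-- The Pauli `Z^γ`: diagonal with entry `ε(tr(γη))` at `η`. -/
def Zm {F : Type} [Field F] [Fintype F] [DecidableEq F] (s : ℕ) (γ : F) : Matrix F F ℂ :=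
  Matrix.diagonal fun η => epsTr s (γ * η)

/-- The diagonal gate `U_β^{(n)}` with diagonal entry `ε(tr(β η^n))` at `η`. -/
def Um {F : Type} [Field F] [Fintype F] [DecidableEq F] (s : ℕ) (n : ℕ) (β : F) :
    Matrix F F ℂ :=
  Matrix.diagonal fun η => epsTr s (β * η ^ n)

/-!
Moving `X^γ` to the left past a diagonal matrix translates the diagonal by `γ`, so the identity
compares the phases `ε(tr(·))` of two diagonal matrices. The map `η ↦ η^(2^k + 1)` is quadratic
over `F_2`: its failure to be additive is the pair of cross terms `η^(2^k) γ + η γ^(2^k)`. Since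
`tr` is invariant under Frobenius, the first cross term may be traded for one linear in `η`, at
the price of a `2^k`-th root of its coefficient. Here `5 = 2^2 + 1`.
-/

lemma add_pow_expChar_pow_add_one {R : Type*} [CommSemiring R] (p : ℕ) [ExpChar R p] (k : ℕ)
    (x y : R) :
    (x + y) ^ (p ^ k + 1) =
      x ^ (p ^ k + 1) + (x ^ p ^ k * y + x * y ^ p ^ k) + y ^ (p ^ k + 1) := by
  rw [pow_succ, add_pow_expChar_pow]
  ring

lemma finrank_eq_of_card_eq_card_pow {K V : Type*} [Field K] [Fintype K] [AddCommGroup V]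
    [Module K V] [Fintype V] {n : ℕ} (h : Fintype.card V = Fintype.card K ^ n) :
    Module.finrank K V = n :=
  Nat.pow_right_injective Fintype.one_lt_card (Module.card_eq_pow_finrank.symm.trans h)

lemma epsTr_mul_self {F : Type} [Field F] [DecidableEq F] (s : ℕ) (x : F) :
    epsTr s x * epsTr s x = 1 := by
  unfold epsTr
  split_ifs <;> norm_num

section Phase

variable {F : Type} [Field F] [Fintype F] [Algebra (ZMod 2) F] {s : ℕ}

lemma trF_eq_algebraMap_trace (hF : Fintype.card F = 2 ^ s) (x : F) :
    trF s x = algebraMap (ZMod 2) F (Algebra.trace (ZMod 2) F x) := by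
  have finrank_eq : Module.finrank (ZMod 2) F = s :=
    finrank_eq_of_card_eq_card_pow (by rw [hF, ZMod.card])
  rw [FiniteField.algebraMap_trace_eq_sum_pow, finrank_eq, Nat.card_zmod, trF]

variable [DecidableEq F]

lemma epsTr_eq_ite_trace (hF : Fintype.card F = 2 ^ s) (x : F) :
    epsTr s x = if Algebra.trace (ZMod 2) F x = 0 then 1 else -1 := by
  simp only [epsTr, trF_eq_algebraMap_trace hF, map_eq_zero]

lemma epsTr_add (hF : Fintype.card F = 2 ^ s) (x y : F) :
    epsTr s (x + y) = epsTr s x * epsTr s y := by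
  simp only [epsTr_eq_ite_trace hF, map_add]
  generalize Algebra.trace (ZMod 2) F x = a, Algebra.trace (ZMod 2) F y = b
  have eq_zero_or_one : ∀ c : ZMod 2, c = 0 ∨ c = 1 := by decide
  rcases eq_zero_or_one a with rfl | rfl <;> rcases eq_zero_or_one b with rfl | rfl <;>
    simp [CharTwo.add_self_eq_zero]

lemma epsTr_pow_two_pow (hF : Fintype.card F = 2 ^ s) (k : ℕ) (x : F) :
    epsTr s (x ^ 2 ^ k) = epsTr s x := by
  let φ := FiniteField.frobeniusAlgEquivOfAlgebraic (ZMod 2) F ^ k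
  have hφ : φ x = x ^ 2 ^ k := by
    simp only [φ, AlgEquiv.coe_pow, FiniteField.coe_frobeniusAlgEquivOfAlgebraic_iterate,
      ZMod.card]
  rw [epsTr_eq_ite_trace hF, epsTr_eq_ite_trace hF, ← hφ, Algebra.trace_eq_of_algEquiv]

lemma epsTr_mul_pow_two_pow (hF : Fintype.card F = 2 ^ s) {k : ℕ} (hk : k ≤ s) (a x : F) :
    epsTr s (a * x ^ 2 ^ k) = epsTr s (a ^ 2 ^ (s - k) * x) := by
  have root_pow : (a ^ 2 ^ (s - k)) ^ 2 ^ k = a := by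
    rw [← pow_mul, ← pow_add, Nat.sub_add_cancel hk, ← hF, FiniteField.pow_card]
  rw [← epsTr_pow_two_pow hF k (a ^ 2 ^ (s - k) * x), mul_pow, root_pow]

lemma epsTr_mul_add_pow_two_pow_add_one (hF : Fintype.card F = 2 ^ s) {k : ℕ} (hk : k ≤ s)
    (β γ η : F) :
    epsTr s (β * (η + γ) ^ (2 ^ k + 1)) * epsTr s (β * η ^ (2 ^ k + 1)) =
      epsTr s (β * γ ^ (2 ^ k + 1)) *
        epsTr s (((β * γ) ^ 2 ^ (s - k) + β * γ ^ 2 ^ k) * η) := by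
  have expand : β * (η + γ) ^ (2 ^ k + 1) =
      β * γ ^ (2 ^ k + 1) + (β * γ * η ^ 2 ^ k + β * γ ^ 2 ^ k * η) + β * η ^ (2 ^ k + 1) := by
    have : CharP F 2 := charP_of_injective_algebraMap' (ZMod 2) 2
    rw [add_pow_expChar_pow_add_one 2]
    ring
  calc
    _ = epsTr s (β * γ ^ (2 ^ k + 1)) *
        (epsTr s (β * γ * η ^ 2 ^ k) * epsTr s (β * γ ^ 2 ^ k * η)) := by
      rw [expand, epsTr_add hF, epsTr_add hF, epsTr_add hF, mul_assoc, epsTr_mul_self, mul_one]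
    _ = _ := by rw [epsTr_mul_pow_two_pow hF hk, ← epsTr_add hF, ← add_mul]

end Phase

lemma diagonal_mul_Xm {F : Type} [Field F] [Fintype F] [DecidableEq F] (d : F → ℂ) (γ : F) :
    Matrix.diagonal d * Xm γ = Xm γ * Matrix.diagonal fun η => d (η + γ) := by
  ext η η'
  simp only [Matrix.diagonal_mul, Matrix.mul_diagonal, Xm, Matrix.of_apply]
  split_ifs with h
  · rw [h, mul_one, one_mul]
  · rw [mul_zero, zero_mul]

theorem U5_conjugation_identity_general
    {s k : ℕ} (hk : k ≤ s) {F : Type} [Field F] [Fintype F] [DecidableEq F]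
    (hF : Fintype.card F = 2 ^ s) (β γ : F) :
    Um s (2 ^ k + 1) β * Xm γ * Um s (2 ^ k + 1) β =
      epsTr s (β * γ ^ (2 ^ k + 1)) •
        (Xm γ * Zm s ((β * γ) ^ 2 ^ (s - k) + β * γ ^ 2 ^ k)) := by
  have : CharP F 2 := charP_of_card_eq_prime_pow hF
  let : Algebra (ZMod 2) F := ZMod.algebra F 2
  rw [Um, diagonal_mul_Xm, Matrix.mul_assoc, Matrix.diagonal_mul_diagonal, Zm, ← Matrix.mul_smul,
    ← Matrix.diagonal_smul]
  congr 2
  ext η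
  exact epsTr_mul_add_pow_two_pow_add_one hF hk β γ η

/-- For `q = 2^s`, `s ≥ 2`: `U_β^{(5)} X^γ U_β^{(5)} = ε(tr(βγ^5)) X^γ Z^{(βγ)^{2^{s-2}} + βγ^4}`
(here `x ↦ x^{2^{s−2}}` is the unique fourth-root map in `F_q`). -/
theorem U5_conjugation_identity
    {s : ℕ} (hs : 2 ≤ s) {F : Type} [Field F] [Fintype F] [DecidableEq F]
    (hF : Fintype.card F = 2 ^ s) (β γ : F) :
    Um s 5 β * Xm γ * Um s 5 β =
      epsTr s (β * γ ^ 5) • (Xm γ * Zm s ((β * γ) ^ 2 ^ (s - 2) + β * γ ^ 4)) :=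
  U5_conjugation_identity_general hs hF β γ
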